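/- arXiv:2009.08447 — 2 statements merged into one kernel-verified Lean document; each statement's English description precedes it below -/
import Mathlib

section
/- Let β ≥ 0 and M ≥ 0; let x₀ ∈ Δⁿ satisfy |log (x₀)_j| ≤ M for every j (in particular x₀ is entrywise positive), let x ∈ Δⁿ, and let x' ∈ Δⁿ be a β-padding of x. Then V_{x₀}(x') − V_{x₀}(x) ≤ β·(2M + n/e + 1 + β), where V_{x₀}(v) = Σ_j v_j log(v_j/(x₀)_j) with the convention 0·log 0 = 0. -/
/-- `x'` is a `β`-padding of `x`: there is `x̃` with `x̃ ≥ x` entrywise,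
`‖x̃ − x‖₁ ≤ β`, and `x' = x̃ / ‖x̃‖₁`. -/
def IsPadding {n : ℕ} (β : ℝ) (x x' : Fin n → ℝ) : Prop :=
  ∃ xt : Fin n → ℝ, (∀ j, x j ≤ xt j) ∧ (∑ j, |xt j - x j|) ≤ β ∧
    ∀ j, x' j = xt j / ∑ k, |xt k|

lemma neg_mul_log_le_aux (x : ℝ) (hx : 0 ≤ x) : -(x * Real.log x) ≤ 1 / Real.exp 1 := by
  rcases hx.eq_or_lt with rfl | hx
  · simp
    positivity
  have he := Real.exp_pos 1
  have h := Real.log_le_sub_one_of_pos (show 0 < 1 / (Real.exp 1 * x) by positivity)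
  rw [one_div, Real.log_inv, Real.log_mul he.ne' hx.ne', Real.log_exp] at h
  have h2 : -Real.log x ≤ (Real.exp 1 * x)⁻¹ := by linarith
  calc -(x * Real.log x) = x * (-Real.log x) := by ring
    _ ≤ x * (Real.exp 1 * x)⁻¹ := mul_le_mul_of_nonneg_left h2 hx.le
    _ = 1 / Real.exp 1 := by field_simp

lemma mul_log_incr_aux (x y B : ℝ) (hx : 0 ≤ x) (hxy : x ≤ y) (hy : y ≤ 1 + B) :
    y * Real.log y ≤ x * Real.log x + (y - x) * (1 + B) := by
  rcases (hx.trans hxy).eq_or_lt with rfl | hy0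
  · have : x = 0 := le_antisymm hxy hx
    simp [this]
  have h1 := Real.log_le_sub_one_of_pos hy0
  have h2 : (y - x) * Real.log y ≤ (y - x) * B :=
    mul_le_mul_of_nonneg_left (by linarith) (by linarith)
  rcases hx.eq_or_lt with rfl | hx
  · simp at *
    nlinarith
  have h3 := Real.log_le_sub_one_of_pos (div_pos hy0 hx)
  rw [Real.log_div hy0.ne' hx.ne'] at h3
  have h4 := mul_le_mul_of_nonneg_left h3 hx.le
  have h5 : x * (y / x - 1) = y - x := by field_simp
  nlinarith

lemma term_aux (x y z B M b r : ℝ) (hx : 0 ≤ x) (hxy : x ≤ y) (hy : y ≤ 1 + B) (hz : 0 < z)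
    (hzM : |Real.log z| ≤ M) (hr0 : 0 < r) (hr1 : r ≤ 1) (hrb : 1 - r ≤ b) (hB : 0 ≤ B) :
    (r * y) * Real.log (r * y / z) - x * Real.log (x / z)
      ≤ b * (1 / Real.exp 1) + (y - x) * (1 + B) + M * ((y - x) + b * x) := by
  have hM : 0 ≤ M := (abs_nonneg _).trans hzM
  have hlog : ∀ t : ℝ, t * Real.log (t / z) = t * Real.log t - t * Real.log z := by
    intro t
    rcases eq_or_ne t 0 with rfl | ht
    · simp
    · rw [Real.log_div ht hz.ne']
      ring
  rw [hlog, hlog]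
  have hy0 := hx.trans hxy
  have e1 : (r * y) * Real.log (r * y) ≤ r * (y * Real.log y) := by
    rcases hy0.eq_or_lt with h | h
    · simp [← h]
    · rw [Real.log_mul hr0.ne' h.ne']
      have := mul_nonneg (mul_nonneg hr0.le hy0) (neg_nonneg.2 (Real.log_nonpos hr0.le hr1))
      nlinarith
  have e2 := mul_le_mul_of_nonneg_left (mul_log_incr_aux x y B hx hxy hy) hr0.le
  have e3 := mul_le_mul_of_nonneg_left (neg_mul_log_le_aux x hx) (sub_nonneg.2 hr1)
  have e4 : (1 - r) * (1 / Real.exp 1) ≤ b * (1 / Real.exp 1) :=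
    mul_le_mul_of_nonneg_right hrb (by positivity)
  have hd : 0 ≤ (y - x) * (1 + B) := mul_nonneg (by linarith) (by linarith)
  have e5 : r * ((y - x) * (1 + B)) ≤ (y - x) * (1 + B) := mul_le_of_le_one_left hd hr1
  obtain ⟨l1, l2⟩ := abs_le.1 hzM
  have e6 : r * (y - x) * (-Real.log z) ≤ (y - x) * M :=
    (mul_le_mul_of_nonneg_left (by linarith) (mul_nonneg hr0.le (by linarith))).trans
      (mul_le_mul_of_nonneg_right (mul_le_of_le_one_left (by linarith) hr1) hM)
  have e7 : (1 - r) * x * Real.log z ≤ b * x * M :=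
    (mul_le_mul_of_nonneg_left l2 (mul_nonneg (by linarith) hx)).trans
      (mul_le_mul_of_nonneg_right (mul_le_mul_of_nonneg_right hrb hx) hM)
  linarith

/-- If `x₀ ∈ Δⁿ` satisfies `|log (x₀)_j| ≤ M` for all `j` (so `x₀` entrywise
positive), `x ∈ Δⁿ`, and `x' ∈ Δⁿ` is a `β`-padding of `x`, then
`V_{x₀}(x') − V_{x₀}(x) ≤ β (2M + n/e + 1 + β)`. -/
theorem padding_divergence_from_reference (n : ℕ) (β M : ℝ) (hβ : 0 ≤ β) (hM : 0 ≤ M)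
    (x₀ x x' : Fin n → ℝ)
    (hx₀ : x₀ ∈ stdSimplex ℝ (Fin n))
    (hx₀pos : ∀ j, 0 < x₀ j)
    (hx₀log : ∀ j, |Real.log (x₀ j)| ≤ M)
    (hx : x ∈ stdSimplex ℝ (Fin n)) (hx' : x' ∈ stdSimplex ℝ (Fin n))
    (hpad : IsPadding β x x') :
    (∑ j, x' j * Real.log (x' j / x₀ j)) - ∑ j, x j * Real.log (x j / x₀ j)
      ≤ β * (2 * M + n / Real.exp 1 + 1 + β) := by
  obtain ⟨xt, hle, hsum, hdiv⟩ := hpad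
  obtain ⟨hx0, hx1⟩ := hx
  have hxt0 : ∀ j, 0 ≤ xt j := fun j => (hx0 j).trans (hle j)
  have hS : ∑ k, |xt k| = ∑ k, xt k := Finset.sum_congr rfl fun k _ => abs_of_nonneg (hxt0 k)
  have hD : ∑ j, |xt j - x j| = ∑ k, xt k - 1 := by
    rw [← hx1, ← Finset.sum_sub_distrib]
    exact Finset.sum_congr rfl fun k _ => abs_of_nonneg (sub_nonneg.2 (hle k))
  have hb0 : 0 ≤ ∑ k, xt k - 1 := by
    rw [← hD]
    exact Finset.sum_nonneg fun _ _ => abs_nonneg _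
  rw [hD] at hsum
  rw [hS] at hdiv
  have hxtle : ∀ j, xt j ≤ ∑ k, xt k := fun j =>
    Finset.single_le_sum (fun k _ => hxt0 k) (Finset.mem_univ j)
  have hdsum : ∑ j, (xt j - x j) = ∑ k, xt k - 1 := by
    rw [Finset.sum_sub_distrib, hx1]
  generalize ∑ k, xt k = s at *
  have hs : 1 ≤ s := by linarith
  have hrb : 1 - s⁻¹ ≤ s - 1 := by
    have h : s * s⁻¹ = 1 := mul_inv_cancel₀ (by linarith)
    have h0 : 0 ≤ s⁻¹ := inv_nonneg.2 (by linarith)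
    nlinarith [mul_nonneg (mul_nonneg hb0 hb0) h0]
  rw [← Finset.sum_sub_distrib]
  calc _ ≤ ∑ j, ((s - 1) * (1 / Real.exp 1) + (xt j - x j) * (1 + β)
        + M * ((xt j - x j) + (s - 1) * x j)) := by
        refine Finset.sum_le_sum fun j _ => ?_
        have h := term_aux (x j) (xt j) (x₀ j) β M (s - 1) s⁻¹ (hx0 j) (hle j)
          (by linarith [hxtle j]) (hx₀pos j) (hx₀log j) (by positivity)
          (inv_le_one_of_one_le₀ hs) hrb hβ
        have e : x' j = s⁻¹ * xt j := by rw [hdiv j, div_eq_inv_mul]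
        rw [e]
        exact h
    _ = (s - 1) * (2 * M + n / Real.exp 1 + 1 + β) := by
        rw [Finset.sum_add_distrib, Finset.sum_add_distrib, ← Finset.sum_mul Finset.univ (fun j => xt j - x j), ← Finset.mul_sum Finset.univ (fun j => (xt j - x j) + (s - 1) * x j),
          Finset.sum_add_distrib, ← Finset.mul_sum Finset.univ x, hdsum, hx1]
        simp
        ring
    _ ≤ _ := mul_le_mul_of_nonneg_right hsum (by positivity)
end

section
/- Let A ∈ ℝ^{m×n} have every row nonzero, let y₀ ∈ Δᵐ have strictly positive entries, let y ∈ Δᵐ, and define p_{ij} = ((y_i + 2·(y₀)_i)/3) · A_{ij}² / ‖A_{i:}‖₂². Then for every w ∈ Δⁿ: Σ_{(i,j) : A_{ij} ≠ 0} w_j · A_{ij}² · ( y_i − (y₀)_i )² / p_{ij} ≤ 2 · ( max_{i∈[m]} ‖A_{i:}‖₂² ) · Σ_{i=1}^m y_i log( y_i / (y₀)_i ), with the convention 0·log 0 = 0. -/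
lemma aux_deriv (t : ℝ) (ht : 0 < t) :
    HasDerivAt (fun t : ℝ => Real.log t - (5*t^2-4*t-1)/(2*(t^2+2*t)))
      ((t-1)^3/(t^2*(t+2)^2)) t := by
  have h1 : HasDerivAt (fun t : ℝ => 5*t^2-4*t-1) (10*t-4) t := by
    have := ((((hasDerivAt_id t).pow 2).const_mul 5).sub ((hasDerivAt_id t).const_mul 4)).sub_const 1
    refine this.congr_deriv ?_
    simp; ring
  have h2 : HasDerivAt (fun t : ℝ => 2*(t^2+2*t)) (4*t+4) t := by
    have := ((((hasDerivAt_id t).pow 2)).add ((hasDerivAt_id t).const_mul 2)).const_mul 2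
    refine this.congr_deriv ?_
    simp; ring
  have h3 : (2*(t^2+2*t)) ≠ 0 := by positivity
  refine ((Real.hasDerivAt_log ht.ne').sub (h1.div h2 h3)).congr_deriv ?_
  have : t + 2 ≠ 0 := by positivity
  have : t ^ 2 + 2 * t ≠ 0 := by positivity
  have e : t ^ 2 + 2 * t = t * (t + 2) := by ring
  rw [e]
  field_simp
  ring

lemma aux_log (t : ℝ) (ht : 0 < t) : (5*t^2-4*t-1)/(2*(t^2+2*t)) ≤ Real.log t := by
  have key : ∀ x : ℝ, 0 < x → ContinuousAt
      (fun t : ℝ => Real.log t - (5*t^2-4*t-1)/(2*(t^2+2*t))) x :=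
    fun x hx => (aux_deriv x hx).continuousAt
  rcases le_total 1 t with h | h
  · have hm : MonotoneOn (fun t : ℝ => Real.log t - (5*t^2-4*t-1)/(2*(t^2+2*t))) (Set.Ici 1) := by
      apply monotoneOn_of_deriv_nonneg (convex_Ici 1)
      · intro x hx
        exact (key x (lt_of_lt_of_le one_pos hx)).continuousWithinAt
      · intro x hx
        rw [interior_Ici] at hx
        exact (aux_deriv x (one_pos.trans hx)).differentiableAt.differentiableWithinAt
      · intro x hx
        rw [interior_Ici] at hx
        rw [(aux_deriv x (one_pos.trans hx)).deriv]
        have : 0 ≤ x - 1 := by have : 1 < x := hx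
                               linarith
        positivity
    have := hm (Set.mem_Ici.2 le_rfl) (Set.mem_Ici.2 h) h
    norm_num at this
    linarith
  · have hm : AntitoneOn (fun t : ℝ => Real.log t - (5*t^2-4*t-1)/(2*(t^2+2*t))) (Set.Ioc 0 1) := by
      apply antitoneOn_of_deriv_nonpos (convex_Ioc 0 1)
      · intro x hx
        exact (key x hx.1).continuousWithinAt
      · intro x hx
        rw [interior_Ioc] at hx
        exact (aux_deriv x hx.1).differentiableAt.differentiableWithinAt
      · intro x hx
        rw [interior_Ioc] at hx
        rw [(aux_deriv x hx.1).deriv]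
        apply div_nonpos_of_nonpos_of_nonneg
        · have h0 : 0 ≤ 1 - x := by linarith [hx.2]
          have : 0 ≤ (1 - x)^3 := by positivity
          nlinarith
        · positivity
    have := hm ⟨ht, h⟩ ⟨one_pos, le_rfl⟩ h
    norm_num at this
    linarith

lemma aux_scalar (a b : ℝ) (ha : 0 ≤ a) (hb : 0 < b) :
    (a - b)^2 / ((a + 2*b)/3) ≤ 2 * (a * Real.log (a/b) - a + b) := by
  rcases ha.eq_or_lt with rfl | ha
  · rw [div_le_iff₀ (by positivity)]
    norm_num
    nlinarith
  · have h := mul_le_mul_of_nonneg_left (aux_log (a/b) (by positivity)) ha.le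
    have e : (a - b)^2 / ((a + 2*b)/3) =
      2 * (a * ((5*(a/b)^2-4*(a/b)-1)/(2*((a/b)^2+2*(a/b)))) - a + b) := by
      have h1 : a + 2 * b ≠ 0 := by positivity
      have e2 : (2*((a/b)^2+2*(a/b))) = 2 * a * (a + 2*b) / b^2 := by field_simp
      rw [e2]
      field_simp
      ring
    rw [e]; linarith

/-- Local-norm second moment bound for the variance-reduced ℓ₁-ℓ₁
coordinate gradient estimator with the "sampling from the sum" distribution
`p_{ij} = ((yᵢ + 2(y₀)ᵢ)/3)·A_{ij}²/‖A_{i:}‖₂²`: for every `w ∈ Δⁿ`,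
`∑_{A_{ij}≠0} wⱼ A_{ij}² (yᵢ − (y₀)ᵢ)² / p_{ij} ≤ 2 (maxᵢ ‖A_{i:}‖₂²) · KL(y ∥ y₀)`. -/
theorem l1l1_vr_estimator_local_moment
    (m n : ℕ) (hm : 0 < m)
    (A : Matrix (Fin m) (Fin n) ℝ) (hrow : ∀ i, A i ≠ 0)
    (y₀ : Fin m → ℝ) (hy₀ : y₀ ∈ stdSimplex ℝ (Fin m)) (hy₀pos : ∀ i, 0 < y₀ i)
    (y : Fin m → ℝ) (hy : y ∈ stdSimplex ℝ (Fin m))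
    (p : Fin m → Fin n → ℝ)
    (hp : ∀ i j, p i j = (y i + 2 * y₀ i) / 3 * ((A i j) ^ 2 / ∑ l, (A i l) ^ 2)) :
    ∀ w ∈ stdSimplex ℝ (Fin n),
      (∑ i, ∑ j, if A i j ≠ 0 then w j * (A i j) ^ 2 * (y i - y₀ i) ^ 2 / p i j else 0)
        ≤ 2 * Finset.univ.sup' ⟨⟨0, hm⟩, Finset.mem_univ _⟩ (fun i => ∑ l, (A i l) ^ 2)
            * ∑ i, y i * Real.log (y i / y₀ i) := by
  intro w hw
  set M := Finset.univ.sup' ⟨⟨0, hm⟩, Finset.mem_univ _⟩ (fun i => ∑ l, (A i l) ^ 2) with hM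
  have hMi : ∀ i, ∑ l, (A i l) ^ 2 ≤ M := fun i =>
    Finset.le_sup' (fun i => ∑ l, (A i l) ^ 2) (Finset.mem_univ i)
  have hM0 : 0 ≤ M := le_trans (Finset.sum_nonneg fun l _ => sq_nonneg _) (hMi ⟨0, hm⟩)
  have hterm : ∀ i j, (if A i j ≠ 0 then w j * (A i j) ^ 2 * (y i - y₀ i) ^ 2 / p i j else 0)
      ≤ w j * (M * (2 * (y i * Real.log (y i / y₀ i) - y i + y₀ i))) := by
    intro i j
    have hs := aux_scalar (y i) (y₀ i) (hy.1 i) (hy₀pos i)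
    have hyi := hy.1 i
    have hy0i := hy₀pos i
    have hq : 0 ≤ (y i - y₀ i)^2 / ((y i + 2 * y₀ i)/3) := by positivity
    split_ifs with h
    · have hS : 0 < ∑ l, (A i l) ^ 2 :=
        Finset.sum_pos' (fun l _ => sq_nonneg _) ⟨j, Finset.mem_univ _, by positivity⟩
      have e : w j * (A i j) ^ 2 * (y i - y₀ i) ^ 2 / p i j =
          w j * ((∑ l, (A i l) ^ 2) * ((y i - y₀ i)^2 / ((y i + 2 * y₀ i)/3))) := by
        rw [hp]
        have : y i + 2 * y₀ i ≠ 0 := by positivity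
        field_simp
      rw [e]
      exact mul_le_mul_of_nonneg_left (mul_le_mul (hMi i) hs hq hM0) (hw.1 j)
    · exact mul_nonneg (hw.1 j) (mul_nonneg hM0 (hq.trans hs))
  refine (Finset.sum_le_sum fun i _ => Finset.sum_le_sum fun j _ => hterm i j).trans ?_
  simp_rw [← Finset.sum_mul, hw.2, one_mul, ← Finset.mul_sum, Finset.sum_add_distrib,
    Finset.sum_sub_distrib, hy.2, hy₀.2]
  apply le_of_eq
  ring
end
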